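/- Let A : ℤ³ → ℤ³ be the additive group homomorphism given by left multiplication by the integer matrix [[1,-1,2],[1,2,-1],[-2,-1,-1]] on column vectors, and let ε : ℤ³ → ℤ be the augmentation homomorphism ε(x,y,z) = x + y + z. Then the range of A is contained in the kernel of ε, and the quotient group (ker ε)/(range A) is isomorphic to ℤ/3ℤ. -/

import Mathlib

/-- The boundary matrix of the disoriented chain complex of the left-handed trefoil. -/
def trefoilBoundaryMatrix : Matrix (Fin 3) (Fin 3) ℤ :=
  !![1, -1, 2; 1, 2, -1; -2, -1, -1]

/-- The additive group homomorphism `ℤ³ → ℤ³` given by left multiplication by the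
matrix `[[1,-1,2],[1,2,-1],[-2,-1,-1]]` on column vectors. -/
def trefoilBoundaryHom : (Fin 3 → ℤ) →+ (Fin 3 → ℤ) :=
  (Matrix.mulVecLin trefoilBoundaryMatrix).toAddMonoidHom

/-- The augmentation homomorphism `ε(x,y,z) = x + y + z` on `ℤ³`. -/
def augmentation : (Fin 3 → ℤ) →+ ℤ where
  toFun x := x 0 + x 1 + x 2
  map_zero' := rfl
  map_add' x y := by simp [Pi.add_apply]; ring

/-! The three rows of the boundary matrix are congruent modulo 3, so the coordinates of a boundary
agree modulo 3. Conversely, a vector of augmentation zero whose first two coordinates agree modulo 3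
is a boundary. The difference of these coordinates modulo 3 therefore identifies
`(ker ε) / (range ∂)` with `ℤ/3ℤ`. -/

/-- The first isomorphism theorem for the restriction of `f` to the subgroup `K`, when `f` is
already surjective on `K`; the kernel of the restriction is written as a subgroup of `K`. -/
noncomputable def quotientKerAddSubgroupOfEquiv {G H : Type*} [AddGroup G] [AddGroup H]
    (f : G →+ H) (K : AddSubgroup G) (hf : Function.Surjective (f.domRestrict K)) :
    K ⧸ f.ker.addSubgroupOf K ≃+ H :=
  (QuotientAddGroup.quotientAddEquivOfEq (f.ker_domRestrict K).symm).trans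
    (QuotientAddGroup.quotientKerEquivOfSurjective (f.domRestrict K) hf)

/-- The homomorphism `v ↦ v j - v i mod n`, which measures the failure of the coordinates `i` and
`j` of an integer vector to agree modulo `n`. -/
def coordDiffMod {ι : Type*} (n : ℕ) (i j : ι) : (ι → ℤ) →+ ZMod n :=
  (Int.castAddHom (ZMod n)).comp
    (Pi.evalAddMonoidHom (fun _ => ℤ) j - Pi.evalAddMonoidHom (fun _ => ℤ) i)

theorem coordDiffMod_apply {ι : Type*} (n : ℕ) (i j : ι) (v : ι → ℤ) :
    coordDiffMod n i j v = ((v j - v i : ℤ) : ZMod n) :=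
  rfl

theorem mem_ker_coordDiffMod {ι : Type*} {n : ℕ} {i j : ι} {v : ι → ℤ} :
    v ∈ (coordDiffMod n i j).ker ↔ (n : ℤ) ∣ v j - v i := by
  rw [AddMonoidHom.mem_ker, coordDiffMod_apply, ZMod.intCast_zmod_eq_zero_iff_dvd]

theorem mem_ker_augmentation {v : Fin 3 → ℤ} :
    v ∈ augmentation.ker ↔ v 0 + v 1 + v 2 = 0 :=
  Iff.rfl

theorem coordDiffMod_domRestrict_ker_augmentation_surjective (n : ℕ) :
    Function.Surjective ((coordDiffMod n (0 : Fin 3) 1).domRestrict augmentation.ker) := by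
  intro t
  obtain ⟨k, rfl⟩ := ZMod.intCast_surjective t
  have zero_sum : ![0, k, -k] ∈ augmentation.ker := mem_ker_augmentation.mpr (by simp)
  exact ⟨⟨_, zero_sum⟩, by simp [coordDiffMod_apply]⟩

theorem trefoilBoundaryHom_apply (x : Fin 3 → ℤ) :
    trefoilBoundaryHom x =
      ![x 0 - x 1 + 2 * x 2, x 0 + 2 * x 1 - x 2, -2 * x 0 - x 1 - x 2] := by
  ext i
  fin_cases i <;>
    simp [trefoilBoundaryHom, trefoilBoundaryMatrix, Matrix.mulVec, dotProduct,
      Fin.sum_univ_three] <;> ring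

theorem trefoilBoundaryHom_range_le_ker_augmentation :
    trefoilBoundaryHom.range ≤ augmentation.ker := by
  rintro _ ⟨x, rfl⟩
  simp only [mem_ker_augmentation, trefoilBoundaryHom_apply, Matrix.cons_val]
  ring

theorem trefoilBoundaryHom_range_le_ker_coordDiffMod :
    trefoilBoundaryHom.range ≤ (coordDiffMod 3 0 1).ker := by
  rintro _ ⟨x, rfl⟩
  refine mem_ker_coordDiffMod.mpr ⟨x 1 - x 2, ?_⟩
  simp only [trefoilBoundaryHom_apply, Matrix.cons_val]
  ring

theorem trefoilBoundaryHom_range_eq_ker_inf_ker :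
    trefoilBoundaryHom.range = augmentation.ker ⊓ (coordDiffMod 3 0 1).ker := by
  refine le_antisymm (le_inf trefoilBoundaryHom_range_le_ker_augmentation
    trefoilBoundaryHom_range_le_ker_coordDiffMod) ?_
  intro v hv
  obtain ⟨in_ker, congruent⟩ := AddSubgroup.mem_inf.mp hv
  have zero_sum : v 0 + v 1 + v 2 = 0 := mem_ker_augmentation.mp in_ker
  obtain ⟨k, hk⟩ : 3 ∣ v 1 - v 0 := mem_ker_coordDiffMod.mp congruent
  -- Since `(-1, 1, 1)` is a cycle, the preimage can be sought with last coordinate zero.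
  refine ⟨![v 0 + k, k, 0], ?_⟩
  rw [trefoilBoundaryHom_apply]
  ext i
  fin_cases i <;> simp <;> lia

/-- The range of the boundary homomorphism is contained in the kernel of the
augmentation, and the quotient `(ker ε)/(range ∂)` is isomorphic to `ℤ/3ℤ`. -/
theorem stmt_1 :
    trefoilBoundaryHom.range ≤ augmentation.ker ∧
      Nonempty
        ((augmentation.ker ⧸ trefoilBoundaryHom.range.addSubgroupOf augmentation.ker)
          ≃+ ZMod 3) := by
  refine ⟨trefoilBoundaryHom_range_le_ker_augmentation, ?_⟩
  rw [trefoilBoundaryHom_range_eq_ker_inf_ker, AddSubgroup.inf_addSubgroupOf_left]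
  exact ⟨quotientKerAddSubgroupOfEquiv (coordDiffMod 3 0 1) augmentation.ker
    (coordDiffMod_domRestrict_ker_augmentation_surjective 3)⟩
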